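/- Let Y be a nonempty finite set, τ > 0, and s, r : Y → ℝ. Let p = softmax_τ(s) and q = softmax_τ(r). Then there exist α ∈ [0, 1/2] and β ∈ [0, 1/2] such that, with a = (1−α)·s + α·r and b = (1−β)·r + β·s, KL(p ‖ q) = KL(q ‖ p) + (1/(4τ²))·Var_{y ∼ softmax_τ(a)}[s(y) − r(y)] − (1/(4τ²))·Var_{y ∼ softmax_τ(b)}[s(y) − r(y)]. -/

import Mathlib

/-!
Write `Λ u = log ∑ y, exp (u y / τ)`. Then
`KL(softmax s ‖ softmax r) = E_{softmax s}[(s - r)/τ] - Λ s + Λ r`.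
Along the segment from `r` to `s`, the function `A t = Λ ((1 - t) r + t s)` has `A'` equal to the
mean and `A''` equal to the variance of `(s - r)/τ` under the softmax of the interpolated score.
Hence the second-order Lagrange remainder formula gives, for some `t ∈ [0, 1/2]`,
`Λ ((r + s)/2) = Λ r + E_{softmax r}[s - r]/(2τ) + Var_t[s - r]/(8τ²)`
(`logSumExp_midpoint`). The same formula with `r` and `s` exchanged expands the same midpoint value
from the other endpoint; eliminating `Λ ((r + s)/2)` between the two yields the claim.
-/

open Finset Set

/-- `softmax τ u` is the probability distribution proportional to `exp (u y / τ)`. -/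
noncomputable def softmax {Y : Type*} [Fintype Y] (τ : ℝ) (u : Y → ℝ) (y : Y) : ℝ :=
  Real.exp (u y / τ) / ∑ y', Real.exp (u y' / τ)

/-- KL divergence between two distributions on a finite set. -/
noncomputable def klDiv {Y : Type*} [Fintype Y] (p q : Y → ℝ) : ℝ :=
  ∑ y, p y * Real.log (p y / q y)

/-- Variance of `g` under the distribution `μ` on a finite set. -/
noncomputable def var {Y : Type*} [Fintype Y] (μ g : Y → ℝ) : ℝ :=
  (∑ y, μ y * (g y) ^ 2) - (∑ y, μ y * g y) ^ 2

/-- Second-order Taylor formula at `0` with Lagrange remainder. -/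
lemma taylor_two_lagrange {f f' f'' : ℝ → ℝ} (hf : ∀ x, HasDerivAt f (f' x) x)
    (hf' : ∀ x, HasDerivAt f' (f'' x) x) {h : ℝ} (hh : 0 < h) :
    ∃ ξ ∈ Ioo 0 h, f h = f 0 + f' 0 * h + f'' ξ * h ^ 2 / 2 := by
  -- Cauchy's mean value theorem for `x ↦ f x - f' 0 * x` against `x ↦ x ^ 2`.
  have hg (x : ℝ) : HasDerivAt (fun x => f x - f' 0 * x) (f' x - f' 0) x := by
    simpa using (hf x).fun_sub ((hasDerivAt_id x).const_mul (f' 0))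
  have hq (x : ℝ) : HasDerivAt (fun x : ℝ => x ^ 2) (2 * x) x := by
    simpa using hasDerivAt_pow 2 x
  obtain ⟨c, hc, hceq⟩ := exists_ratio_hasDerivAt_eq_ratio_slope
    (fun x => f x - f' 0 * x) (fun x => f' x - f' 0) hh
    (fun x _ => (hg x).continuousAt.continuousWithinAt) (fun x _ => hg x)
    (fun x => x ^ 2) (fun x => 2 * x)
    (fun x _ => (hq x).continuousAt.continuousWithinAt) (fun x _ => hq x)
  obtain ⟨ξ, hξ, hξeq⟩ := exists_hasDerivAt_eq_slope f' f'' hc.1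
    (fun x _ => (hf' x).continuousAt.continuousWithinAt) (fun x _ => hf' x)
  have hc0 : c ≠ 0 := hc.1.ne'
  refine ⟨ξ, ⟨hξ.1, hξ.2.trans hc.2⟩, ?_⟩
  rw [sub_zero, eq_div_iff hc0] at hξeq
  rw [← hξeq] at hceq
  apply mul_left_cancel₀ hc0
  linear_combination -hceq / 2

/-- The log-partition function `log ∑ y, exp (u y / τ)`. -/
noncomputable def logSumExp {Y : Type*} [Fintype Y] (τ : ℝ) (u : Y → ℝ) : ℝ :=
  Real.log (∑ y, Real.exp (u y / τ))

lemma sum_exp_pos {Y : Type*} [Fintype Y] [Nonempty Y] (τ : ℝ) (u : Y → ℝ) :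
    0 < ∑ y, Real.exp (u y / τ) :=
  Finset.sum_pos (fun _ _ => Real.exp_pos _) Finset.univ_nonempty

lemma sum_softmax {Y : Type*} [Fintype Y] [Nonempty Y] (τ : ℝ) (u : Y → ℝ) :
    ∑ y, softmax τ u y = 1 := by
  simp only [softmax]
  rw [← Finset.sum_div, div_self (sum_exp_pos τ u).ne']

lemma log_softmax {Y : Type*} [Fintype Y] [Nonempty Y] (τ : ℝ) (u : Y → ℝ) (y : Y) :
    Real.log (softmax τ u y) = u y / τ - logSumExp τ u := by
  rw [softmax, Real.log_div (Real.exp_ne_zero _) (sum_exp_pos τ u).ne', Real.log_exp, logSumExp]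

lemma softmax_ne_zero {Y : Type*} [Fintype Y] [Nonempty Y] (τ : ℝ) (u : Y → ℝ) (y : Y) :
    softmax τ u y ≠ 0 :=
  (div_pos (Real.exp_pos _) (sum_exp_pos τ u)).ne'

lemma klDiv_softmax {Y : Type*} [Fintype Y] [Nonempty Y] (τ : ℝ) (s r : Y → ℝ) :
    klDiv (softmax τ s) (softmax τ r)
      = (∑ y, softmax τ s y * (s y - r y)) / τ - logSumExp τ s + logSumExp τ r := by
  have h (y : Y) : softmax τ s y * Real.log (softmax τ s y / softmax τ r y)
      = softmax τ s y * (s y - r y) / τ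
        + softmax τ s y * (logSumExp τ r - logSumExp τ s) := by
    rw [Real.log_div (softmax_ne_zero τ s y) (softmax_ne_zero τ r y), log_softmax, log_softmax]
    ring
  simp only [klDiv, h]
  rw [Finset.sum_add_distrib, ← Finset.sum_mul, sum_softmax, Finset.sum_div]
  ring

/-- Differentiating the weighted exponential sum along the segment from `r` to `s` multiplies each
weight by `(s - r) / τ`. -/
lemma hasDerivAt_sum_mul_exp {Y : Type*} [Fintype Y] (τ : ℝ) (s r w : Y → ℝ) (t : ℝ) :
    HasDerivAt (fun t => ∑ y, w y * Real.exp (((1 - t) * r y + t * s y) / τ))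
      (∑ y, w y * ((s y - r y) / τ) * Real.exp (((1 - t) * r y + t * s y) / τ)) t := by
  refine HasDerivAt.fun_sum fun y _ => ?_
  have h1 : HasDerivAt (fun t : ℝ => ((1 - t) * r y + t * s y) / τ) ((s y - r y) / τ) t := by
    have := ((((hasDerivAt_id' t).const_sub 1).mul_const (r y)).fun_add
      ((hasDerivAt_id' t).mul_const (s y))).div_const τ
    exact this.congr_deriv (by ring)
  exact (h1.exp.const_mul (w y)).congr_deriv (by ring)

/-- Taylor expansion of the log-partition function from `r` to the midpoint of `r` and `s`. -/
lemma logSumExp_midpoint {Y : Type*} [Fintype Y] [Nonempty Y] (τ : ℝ) (s r : Y → ℝ) :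
    ∃ β ∈ Icc (0:ℝ) (1/2),
      logSumExp τ (fun y => (r y + s y) / 2)
        = logSumExp τ r + (∑ y, softmax τ r y * (s y - r y)) / (2 * τ)
          + 1 / (8 * τ ^ 2) *
            var (softmax τ (fun y => (1 - β) * r y + β * s y)) (fun y => s y - r y) := by
  -- Weighted exponential sums: `Z` with `w = 1, d, d ^ 2`, where `d = (s - r) / τ`, are the
  -- partition function and its first two derivatives.
  set d : Y → ℝ := fun y => (s y - r y) / τ with hd
  set Z : (Y → ℝ) → ℝ → ℝ :=
    fun w t => ∑ y, w y * Real.exp (((1 - t) * r y + t * s y) / τ) with hZ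
  have hZ' (w : Y → ℝ) (t : ℝ) : HasDerivAt (Z w) (Z (fun y => w y * d y) t) t :=
    hasDerivAt_sum_mul_exp τ s r w t
  have hZ0 (t : ℝ) : Z (fun _ => 1) t ≠ 0 := by
    simpa [hZ] using (sum_exp_pos τ (fun y => (1 - t) * r y + t * s y)).ne'
  have hA (t : ℝ) := (hZ' (fun _ => 1) t).log (hZ0 t)
  have hA' (t : ℝ) := (hZ' (fun y => 1 * d y) t).div (hZ' (fun _ => 1) t) (hZ0 t)
  obtain ⟨β, hβ, h⟩ := taylor_two_lagrange hA hA' (h := 1 / 2) (by norm_num)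
  refine ⟨β, ⟨hβ.1.le, hβ.2.le⟩, ?_⟩
  have hmean (w : Y → ℝ) (t : ℝ) : Z w t / Z (fun _ => 1) t
      = ∑ y, softmax τ (fun y => (1 - t) * r y + t * s y) y * w y := by
    simp only [hZ, softmax, one_mul]
    rw [Finset.sum_div]
    exact Finset.sum_congr rfl fun y _ => by ring
  have hlog (t : ℝ) : Real.log (Z (fun _ => 1) t)
      = logSumExp τ (fun y => (1 - t) * r y + t * s y) := by
    simp only [hZ, logSumExp, one_mul]
  have hvar : (Z (fun y => 1 * d y * d y) β * Z (fun _ => 1) β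
        - Z (fun y => 1 * d y) β * Z (fun y => 1 * d y) β) / Z (fun _ => 1) β ^ 2
      = 1 / τ ^ 2 *
        var (softmax τ (fun y => (1 - β) * r y + β * s y)) (fun y => s y - r y) := by
    have e : (Z (fun y => 1 * d y * d y) β * Z (fun _ => 1) β
        - Z (fun y => 1 * d y) β * Z (fun y => 1 * d y) β) / Z (fun _ => 1) β ^ 2
        = Z (fun y => 1 * d y * d y) β / Z (fun _ => 1) β
          - (Z (fun y => 1 * d y) β / Z (fun _ => 1) β) ^ 2 := by
      have := hZ0 β
      field_simp
    rw [e, hmean, hmean, var, mul_sub, ← one_div_pow, ← mul_pow, Finset.mul_sum, Finset.mul_sum]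
    congr 1
    · exact Finset.sum_congr rfl fun y _ => by simp only [hd]; ring
    · congr 1
      exact Finset.sum_congr rfl fun y _ => by simp only [hd]; ring
  have hmid : (fun y => (1 - (1 / 2 : ℝ)) * r y + 1 / 2 * s y) = fun y => (r y + s y) / 2 := by
    ext y; ring
  have hzero : (fun y => (1 - (0 : ℝ)) * r y + 0 * s y) = r := by
    ext y; ring
  have hm0 : ∑ y, softmax τ r y * (1 * d y) = (∑ y, softmax τ r y * (s y - r y)) / τ := by
    rw [Finset.sum_div]
    exact Finset.sum_congr rfl fun y _ => by simp only [hd]; ring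
  rw [hvar, hlog, hlog, hmean, hmid, hzero, hm0] at h
  rw [h]
  ring

theorem kl_reversal_variance {Y : Type*} [Fintype Y] [Nonempty Y]
    (τ : ℝ) (hτ : 0 < τ) (s r : Y → ℝ) :
    ∃ α ∈ Icc (0:ℝ) (1/2), ∃ β ∈ Icc (0:ℝ) (1/2),
      klDiv (softmax τ s) (softmax τ r)
        = klDiv (softmax τ r) (softmax τ s)
          + (1 / (4 * τ ^ 2)) *
              var (softmax τ (fun y => (1 - α) * s y + α * r y)) (fun y => s y - r y)
          - (1 / (4 * τ ^ 2)) *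
              var (softmax τ (fun y => (1 - β) * r y + β * s y)) (fun y => s y - r y) := by
  obtain ⟨α, hα, h1⟩ := logSumExp_midpoint τ r s
  obtain ⟨β, hβ, h2⟩ := logSumExp_midpoint τ s r
  refine ⟨α, hα, β, hβ, ?_⟩
  have hmid : (fun y => (s y + r y) / 2) = fun y => (r y + s y) / 2 := by
    ext y; ring
  have hneg (μ : Y → ℝ) :
      ∑ y, μ y * (r y - s y) = -∑ y, μ y * (s y - r y) := by
    rw [← Finset.sum_neg_distrib]
    exact Finset.sum_congr rfl fun y _ => by ring
  have hvar (μ : Y → ℝ) : var μ (fun y => r y - s y) = var μ (fun y => s y - r y) := by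
    simp only [var, hneg, neg_sq]
    congr 1
    exact Finset.sum_congr rfl fun y _ => by ring
  rw [hmid, hneg, hvar, h2] at h1
  rw [klDiv_softmax, klDiv_softmax, hneg]
  linear_combination 2 * h1
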